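/- Let F₂ be the free group on generators a,b, let B₁ = {e, a, b, a⁻¹, b⁻¹}, and let X_✚ = {x ∈ (ℤ/2ℤ)^{F₂} : Σ_{s∈B₁} x(gs) = 0 for every g ∈ F₂} be the 5-dot shift. Then the shift action F₂ ↷ X_✚ has no off-diagonal asymptotic pairs. -/

import Mathlib

/-- The 5-dot shift `X_✚ ⊆ (ℤ/2ℤ)^{F₂}`: configurations `x` with
`Σ_{s ∈ {e,a,b,a⁻¹,b⁻¹}} x (g s) = 0` for every `g ∈ F₂`. -/
def Xcross : Set (FreeGroup (Fin 2) → ZMod 2) :=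
  {x | ∀ g : FreeGroup (Fin 2),
    x g + x (g * FreeGroup.of 0) + x (g * FreeGroup.of 1)
      + x (g * (FreeGroup.of 0)⁻¹) + x (g * (FreeGroup.of 1)⁻¹) = 0}

/-!
Free groups have unique products: for finite nonempty `A` and `B`, some product `a * b` arises only
once in `A * B`. This is Higman's argument, by induction on `#A + #B`. After translating both
sets to contain `1`, the subgroup generated by `A ∪ B` is free by Nielsen–Schreier, hence maps
nontrivially to `ℤ`; over a unique sum of the images lies a pair of fibers smaller than `(A, B)`,
and a unique product of these fibers is one of `A` and `B`.

If `z` has nonempty finite support `S` and `a * s⁻¹` is a unique product of `S` and `B⁻¹`, then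
the sum of `z` over the translated window `a * s⁻¹ * B` has the single nonzero term `z a`, so it
cannot vanish.
-/

open Finset
open scoped Pointwise

section UniqueProducts

variable {G K : Type*}

/-- The pair `(A, B)` has a unique product: the conclusion of `UniqueProds` for two fixed finite
sets, isolated so that it can be transported between pairs. -/
def HasUniqueMul [Mul G] (A B : Finset G) : Prop :=
  ∃ a ∈ A, ∃ b ∈ B, UniqueMul A B a b

theorem hasUniqueMul_map_iff [Mul G] [Mul K] (f : G ↪ K) (map_mul : ∀ x y, f (x * y) = f x * f y)
    {A B : Finset G} : HasUniqueMul (A.map f) (B.map f) ↔ HasUniqueMul A B := by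
  simp [HasUniqueMul, UniqueMul.mulHom_map_iff f map_mul]

theorem HasUniqueMul.of_smul [Group G] [DecidableEq G] {A B : Finset G} (g h : G)
    (hAB : HasUniqueMul (g • A) (MulOpposite.op h • B)) : HasUniqueMul A B := by
  obtain ⟨_, ha, _, hb, hunique⟩ := hAB
  obtain ⟨a, haA, rfl⟩ := mem_smul_finset.1 ha
  obtain ⟨b, hbB, rfl⟩ := mem_smul_finset.1 hb
  refine ⟨a, haA, b, hbB, fun a' b' ha' hb' hab ↦ ?_⟩
  have regroup (c d : G) : g • c * MulOpposite.op h • d = g * (c * d) * h := by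
    simp only [smul_eq_mul, op_smul_eq_mul, mul_assoc]
  have hab' : g • a' * MulOpposite.op h • b' = g • a * MulOpposite.op h • b := by
    rw [regroup, regroup, hab]
  simpa only [smul_left_cancel_iff] using
    hunique (smul_mem_smul_finset ha') (smul_mem_smul_finset hb') hab'

theorem HasUniqueMul.of_fibers [Mul G] [Mul K] [UniqueProds K] [DecidableEq K] (f : G →ₙ* K)
    {A B : Finset G} (hA : A.Nonempty) (hB : B.Nonempty)
    (hfibers : ∀ k l, {a ∈ A | f a = k}.Nonempty → {b ∈ B | f b = l}.Nonempty →
      HasUniqueMul {a ∈ A | f a = k} {b ∈ B | f b = l}) : HasUniqueMul A B := by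
  obtain ⟨k, hk, l, hl, hkl⟩ := UniqueProds.uniqueMul_of_nonempty (hA.image f) (hB.image f)
  obtain ⟨a, ha, b, hb, hab⟩ :=
    hfibers k l (fiber_nonempty_iff_mem_image.2 hk) (fiber_nonempty_iff_mem_image.2 hl)
  rw [mem_filter] at ha hb
  exact ⟨a, ha.1, b, hb.1, .of_image_filter f ha.2 hb.2 hkl hab⟩

theorem card_fiber_lt [DecidableEq K] {f : G → K} {A : Finset G} {a b : G} (ha : a ∈ A)
    (hb : b ∈ A) (hab : f a ≠ f b) (k : K) : #{x ∈ A | f x = k} < #A := by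
  refine card_lt_card (filter_ssubset.2 ?_)
  by_contra! h
  exact hab ((h a ha).trans (h b hb).symm)

theorem HasUniqueMul.of_hom [MulOneClass G] [MulOneClass K] [UniqueProds K] (f : G →* K)
    {A B : Finset G} (hA : 1 ∈ A) (hB : 1 ∈ B) {s : G} (hs : s ∈ A ∨ s ∈ B) (hfs : f s ≠ 1)
    (ih : ∀ A' B' : Finset G, A'.Nonempty → B'.Nonempty → #A' + #B' < #A + #B →
      HasUniqueMul A' B') : HasUniqueMul A B := by
  classical
  refine .of_fibers (f : G →ₙ* K) ⟨1, hA⟩ ⟨1, hB⟩ fun k l hk hl ↦ ih _ _ hk hl ?_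
  have hne : f s ≠ f 1 := by rwa [map_one]
  rcases hs with hs | hs
  · exact add_lt_add_of_lt_of_le (card_fiber_lt hs hA hne k) (card_filter_le _ _)
  · exact add_lt_add_of_le_of_lt (card_filter_le _ _) (card_fiber_lt hs hB hne l)

theorem HasUniqueMul.of_subgroup_hom [Group G] [MulOneClass K] [UniqueProds K]
    {H : Subgroup G} (f : H →* K) {A B : Finset G} (hAH : ∀ a ∈ A, a ∈ H) (hBH : ∀ b ∈ B, b ∈ H)
    (hA : 1 ∈ A) (hB : 1 ∈ B) {s : H} (hs : ↑s ∈ A ∨ ↑s ∈ B) (hfs : f s ≠ 1)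
    (ih : ∀ A' B' : Finset G, A'.Nonempty → B'.Nonempty → #A' + #B' < #A + #B →
      HasUniqueMul A' B') : HasUniqueMul A B := by
  classical
  have hA_map : (A.subtype (· ∈ H)).map (.subtype _) = A := subtype_map_of_mem hAH
  have hB_map : (B.subtype (· ∈ H)).map (.subtype _) = B := subtype_map_of_mem hBH
  rw [← hA_map, ← hB_map, hasUniqueMul_map_iff _ fun _ _ ↦ rfl]
  refine .of_hom f (mem_subtype.2 hA) (mem_subtype.2 hB)
    (hs.imp mem_subtype.2 mem_subtype.2) hfs fun A' B' hA' hB' hcard ↦ ?_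
  rw [← hasUniqueMul_map_iff (.subtype (· ∈ H)) fun _ _ ↦ rfl]
  refine ih _ _ hA'.map hB'.map ?_
  rwa [← hA_map, ← hB_map, card_map, card_map, card_map, card_map]

end UniqueProducts

section LocallyIndicable

variable {G : Type*} [Group G]

/-- A group is locally indicable if each of its nontrivial finitely generated subgroups has a
nontrivial homomorphism to `ℤ`, here written multiplicatively. -/
def IsLocallyIndicable (G : Type*) [Group G] : Prop :=
  ∀ H : Subgroup G, H.FG → H ≠ ⊥ → ∃ f : H →* Multiplicative ℤ, f ≠ 1

theorem IsLocallyIndicable.exists_hom_closure (hG : IsLocallyIndicable G) {S : Set G}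
    (hS : S.Finite) (hne : ∃ s ∈ S, s ≠ 1) :
    ∃ f : Subgroup.closure S →* Multiplicative ℤ, ∃ s, ↑s ∈ S ∧ f s ≠ 1 := by
  have hbot : Subgroup.closure S ≠ ⊥ := by
    simpa [Subgroup.closure_eq_bot_iff, Set.subset_def] using hne
  obtain ⟨f, hf⟩ := hG _ ((Subgroup.fg_iff _).2 ⟨S, rfl, hS⟩) hbot
  refine ⟨f, ?_⟩
  contrapose! hf
  exact MonoidHom.eq_of_eqOn_dense (Subgroup.closure_closure_coe_preimage (k := S)) hf

theorem IsLocallyIndicable.hasUniqueMul_of_one_mem (hG : IsLocallyIndicable G) {A B : Finset G}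
    (hA : 1 ∈ A) (hB : 1 ∈ B)
    (ih : ∀ A' B' : Finset G, A'.Nonempty → B'.Nonempty → #A' + #B' < #A + #B →
      HasUniqueMul A' B') : HasUniqueMul A B := by
  by_cases hne : ∃ s ∈ (A ∪ B : Set G), s ≠ 1
  · obtain ⟨f, s, hs, hfs⟩ := hG.exists_hom_closure (A.finite_toSet.union B.finite_toSet) hne
    exact .of_subgroup_hom f (fun a ha ↦ Subgroup.subset_closure (.inl ha))
      (fun b hb ↦ Subgroup.subset_closure (.inr hb)) hA hB hs hfs ih
  · push Not at hne
    exact ⟨1, hA, 1, hB, fun a b ha hb _ ↦ ⟨hne a (.inl ha), hne b (.inr hb)⟩⟩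

theorem IsLocallyIndicable.hasUniqueMul (hG : IsLocallyIndicable G) {A B : Finset G}
    (hA : A.Nonempty) (hB : B.Nonempty) : HasUniqueMul A B := by
  classical
  induction hn : #A + #B using Nat.strong_induction_on generalizing A B with
  | _ n ih =>
    obtain ⟨a, ha⟩ := hA
    obtain ⟨b, hb⟩ := hB
    refine .of_smul a⁻¹ b⁻¹ (hG.hasUniqueMul_of_one_mem ?_ ?_ fun A' B' hA' hB' hcard ↦ ?_)
    · exact mem_smul_finset.2 ⟨a, ha, inv_mul_cancel a⟩
    · exact mem_smul_finset.2 ⟨b, hb, mul_inv_cancel b⟩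
    · rw [card_smul_finset, card_smul_finset, hn] at hcard
      exact ih _ hcard hA' hB' rfl

theorem IsLocallyIndicable.uniqueProds (hG : IsLocallyIndicable G) : UniqueProds G :=
  ⟨hG.hasUniqueMul⟩

end LocallyIndicable

section FreeGroups

variable {G : Type*} [Group G] [IsFreeGroup G]

theorem exists_hom_int_ne_one_of_isFreeGroup [Nontrivial G] :
    ∃ f : G →* Multiplicative ℤ, f ≠ 1 := by
  have hgen : Nonempty (IsFreeGroup.Generators G) := by
    by_contra! hempty
    exact not_subsingleton G (IsFreeGroup.toFreeGroup G).subsingleton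
  obtain ⟨a⟩ := hgen
  refine ⟨IsFreeGroup.lift fun _ ↦ .ofAdd 1, fun h ↦ ?_⟩
  simpa using DFunLike.congr_fun h (IsFreeGroup.of a)

theorem isLocallyIndicable_of_isFreeGroup : IsLocallyIndicable G := by
  intro H _ hH
  have : Nontrivial H := (Subgroup.nontrivial_iff_ne_bot H).2 hH
  exact exists_hom_int_ne_one_of_isFreeGroup

instance uniqueProds_of_isFreeGroup : UniqueProds G :=
  isLocallyIndicable_of_isFreeGroup.uniqueProds

end FreeGroups

section DotShift

variable {G : Type*} [Group G] {M : Type*} [AddCommGroup M]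

/-- The dot shift with window `B`: the configurations `G → M` whose sum over every left translate
of `B` vanishes. It is a subgroup of the full shift, which reduces asymptotic pairs to finitely
supported configurations. -/
def dotShift (B : Finset G) (M : Type*) [AddCommGroup M] : AddSubgroup (G → M) where
  carrier := {x | ∀ g, ∑ s ∈ B, x (g * s) = 0}
  zero_mem' _ := sum_const_zero
  add_mem' hx hy g := by simp only [Pi.add_apply, sum_add_distrib, hx g, hy g, add_zero]
  neg_mem' hx g := by simp only [Pi.neg_apply, sum_neg_distrib, hx g, neg_zero]

theorem eq_zero_of_mem_dotShift [UniqueProds G] {B : Finset G} (hB : B.Nonempty) {z : G → M}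
    (hz : z ∈ dotShift B M) (hfin : z.support.Finite) : z = 0 := by
  classical
  by_contra hne
  have hsupp : hfin.toFinset.Nonempty := by
    simpa only [Set.Finite.toFinset_nonempty, Function.support_nonempty_iff] using hne
  obtain ⟨a, ha, t, ht, hunique⟩ := UniqueProds.uniqueMul_of_nonempty hsupp hB.inv
  have hvanish : ∀ s ∈ B, s ≠ t⁻¹ → z (a * t * s) = 0 := by
    intro s hs hst
    by_contra hzs
    have hprod : a * t * s * s⁻¹ = a * t := mul_inv_cancel_right _ _
    exact hst (inv_eq_iff_eq_inv.1
      (hunique (hfin.mem_toFinset.2 hzs) (inv_mem_inv hs) hprod).2)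
  have hza : z a = 0 := calc
    z a = z (a * t * t⁻¹) := by rw [mul_inv_cancel_right]
    _ = ∑ s ∈ B, z (a * t * s) := (sum_eq_single_of_mem _ (mem_inv'.1 ht) hvanish).symm
    _ = 0 := hz (a * t)
  exact hfin.mem_toFinset.1 ha hza

theorem stmt18_general [UniqueProds G] {B : Finset G} (hB : B.Nonempty) {x y : G → M}
    (hx : x ∈ dotShift B M) (hy : y ∈ dotShift B M) (hasym : {g | x g ≠ y g}.Finite) : x = y := by
  refine sub_eq_zero.1 (eq_zero_of_mem_dotShift hB (sub_mem hx hy) ?_)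
  simpa only [Function.support, Pi.sub_apply, sub_ne_zero] using hasym

end DotShift

/-- The window `B₁ = {e, a, b, a⁻¹, b⁻¹}` of the 5-dot shift: the unit ball of `F₂`. -/
def crossWindow : Finset (FreeGroup (Fin 2)) :=
  {1, .of 0, .of 1, (.of 0)⁻¹, (.of 1)⁻¹}

theorem crossWindow_nonempty : crossWindow.Nonempty :=
  insert_nonempty _ _

theorem sum_crossWindow {M : Type*} [AddCommMonoid M] (f : FreeGroup (Fin 2) → M) :
    ∑ s ∈ crossWindow, f s =
      f 1 + f (.of 0) + f (.of 1) + f (.of 0)⁻¹ + f (.of 1)⁻¹ := by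
  rw [crossWindow, sum_insert (by decide), sum_insert (by decide), sum_insert (by decide),
    sum_insert (by decide), sum_singleton]
  simp only [add_assoc]

theorem mem_dotShift_crossWindow_iff {x : FreeGroup (Fin 2) → ZMod 2} :
    x ∈ dotShift crossWindow (ZMod 2) ↔ x ∈ Xcross :=
  forall_congr' fun g ↦ by rw [sum_crossWindow, mul_one]

/-- The shift action `F₂ ↷ X_✚` on the 5-dot shift has no off-diagonal
asymptotic pairs: if `x, y ∈ X_✚` agree outside a finite subset of `F₂` (which, for
subshifts, is equivalent to being an asymptotic pair), then `x = y`. -/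
theorem stmt18 (x y : FreeGroup (Fin 2) → ZMod 2)
    (hx : x ∈ Xcross) (hy : y ∈ Xcross)
    (hasym : {g : FreeGroup (Fin 2) | x g ≠ y g}.Finite) :
    x = y :=
  stmt18_general crossWindow_nonempty (mem_dotShift_crossWindow_iff.2 hx)
    (mem_dotShift_crossWindow_iff.2 hy) hasym
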